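/- Let A, B ∈ M_n(ℂ) be self-adjoint matrices with A majorized by B (i.e., there is a doubly stochastic matrix X with X·λ(B) = λ(A), where λ(A), λ(B) are eigenvalue vectors). Then there exist unitaries U₁, …, U_{2^{n−1}} ∈ M_n(ℂ) such that A = ∑_{i=1}^{2^{n−1}} (1/2^{n−1}) U_i* B U_i. -/

import Mathlib

open Matrix

def IsDoublyStochastic {n : ℕ} (X : Matrix (Fin n) (Fin n) ℝ) : Prop :=
  (∀ i j, 0 ≤ X i j) ∧ (∀ i, ∑ j, X i j = 1) ∧ (∀ j, ∑ i, X i j = 1)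

/-!
Arrange both eigenvalue vectors in decreasing order, so that majorization becomes domination of
prefix sums. If `k` is the first index with `b k < a k`, then some `j < k` has `a j < b j`, and a
T-transform of `b` moving `min (b j - a j) (a k - b k)` from `b j` to `b k` preserves the
domination and creates a new coordinate where `a` and `b` agree. Two vectors with equal sums never
differ in exactly one coordinate, so `n - 1` T-transforms suffice.

A T-transform of a diagonal matrix `B` is an average of two unitary conjugates: a plane rotation
has the form `G + H` with `G` self-adjoint, `H` skew-adjoint and `G`, `H` commuting; `G - H` is the
inverse rotation, and the terms mixing `G` and `H` cancel in the average of the two conjugates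
of `B`. Every T-transform therefore doubles the number of unitaries.
-/

open scoped BigOperators

section UnitaryAverage

variable {R : Type*} [Semiring R] [StarRing R] [Algebra ℚ≥0 R] {A B C : R}

/-- `A` is the uniform average of `N` unitary conjugates of `B`. For `N = 0` the average is the junk
value `0`. -/
def IsUnitaryAverage (N : ℕ) (A B : R) : Prop :=
  ∃ U : Fin N → unitary R, A = 𝔼 i, star (U i : R) * B * U i

namespace IsUnitaryAverage

theorem conj (U : unitary R) : IsUnitaryAverage 1 (star (U : R) * B * U) B :=
  ⟨fun _ => U, by simp⟩

theorem conj_right (U : unitary R) : IsUnitaryAverage 1 B (star (U : R) * B * U) :=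
  ⟨fun _ => star U, by
    simp only [Fintype.expect_const, Unitary.coe_star, star_star, mul_assoc,
      Unitary.mul_star_self_of_mem U.2, mul_one]
    rw [← mul_assoc, Unitary.mul_star_self_of_mem U.2, one_mul]⟩

theorem refl (N : ℕ) [NeZero N] (B : R) : IsUnitaryAverage N B B :=
  ⟨1, by simp⟩

theorem trans {M N : ℕ} (hAB : IsUnitaryAverage M A B) (hBC : IsUnitaryAverage N B C) :
    IsUnitaryAverage (M * N) A C := by
  obtain ⟨U, rfl⟩ := hAB
  obtain ⟨V, rfl⟩ := hBC
  let e := (finProdFinEquiv (m := M) (n := N)).symm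
  refine ⟨fun p => V (e p).2 * U (e p).1, ?_⟩
  symm
  calc 𝔼 p, star (V (e p).2 * U (e p).1 : R) * C * (V (e p).2 * U (e p).1)
    _ = 𝔼 q : Fin M × Fin N, star (V q.2 * U q.1 : R) * C * (V q.2 * U q.1) :=
        Fintype.expect_equiv e _ _ fun _ => rfl
    _ = 𝔼 i, star (U i : R) * (𝔼 j, star (V j : R) * C * V j) * U i := by
        rw [← Finset.univ_product_univ, Finset.expect_product]
        simp only [Finset.mul_expect, Finset.expect_mul, star_mul, mul_assoc]

end IsUnitaryAverage

end UnitaryAverage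

theorem add_mem_unitary_of_commute {R : Type*} [Ring R] [StarRing R] {G H : R}
    (hG : star G = G) (hH : star H = -H) (hGH : Commute G H) (h : G * G - H * H = 1) :
    G + H ∈ unitary R := by
  rw [Unitary.mem_iff, star_add, hG, hH, ← sub_eq_add_neg, ← hGH.mul_self_sub_mul_self_eq',
    ← hGH.mul_self_sub_mul_self_eq]
  exact ⟨h, h⟩

theorem IsUnitaryAverage.mul_mul_sub_mul_mul {R : Type*} [Ring R] [StarRing R] [Algebra ℚ≥0 R]
    {B G H : R} (hG : star G = G) (hH : star H = -H) (hGH : Commute G H)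
    (h : G * G - H * H = 1) : IsUnitaryAverage 2 (G * B * G - H * B * H) B := by
  have hadd : G + H ∈ unitary R := add_mem_unitary_of_commute hG hH hGH h
  have hsub : G + -H ∈ unitary R :=
    add_mem_unitary_of_commute hG (by rw [star_neg, hH]) hGH.neg_right (by rwa [neg_mul_neg])
  have cross_terms_cancel : star (G + H) * B * (G + H) + star (G + -H) * B * (G + -H) =
      (2 : ℚ≥0) • (G * B * G - H * B * H) := by
    rw [two_smul, star_add, star_add, star_neg, hG, hH]
    noncomm_ring
  refine ⟨![⟨G + H, hadd⟩, ⟨G + -H, hsub⟩], ?_⟩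
  rw [Finset.expect_univ, Fin.sum_univ_two]
  change _ = _ • (star (G + H) * B * (G + H) + star (G + -H) * B * (G + -H))
  rw [cross_terms_cancel, Fintype.card_fin, Nat.cast_ofNat, inv_smul_smul₀ two_ne_zero]

section TTransform

variable {ι K : Type*} [DecidableEq ι] [Ring K]

/-- The T-transform, or Robin Hood transfer, of the vector `b`: the combination of `b` and of its
copy with the coordinates `j` and `k` exchanged, with weights `t` and `1 - t`, convex for
`t ∈ [0, 1]`. -/
def tTransform (j k : ι) (t : K) (b : ι → K) : ι → K :=
  fun i => t * b i + (1 - t) * b (Equiv.swap j k i)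

theorem tTransform_apply_left (j k : ι) (t : K) (b : ι → K) :
    tTransform j k t b j = t * b j + (1 - t) * b k := by
  rw [tTransform, Equiv.swap_apply_left]

theorem tTransform_apply_right (j k : ι) (t : K) (b : ι → K) :
    tTransform j k t b k = t * b k + (1 - t) * b j := by
  rw [tTransform, Equiv.swap_apply_right]

theorem tTransform_apply_of_ne {i j k : ι} (hij : i ≠ j) (hik : i ≠ k) (t : K) (b : ι → K) :
    tTransform j k t b i = b i := by
  rw [tTransform, Equiv.swap_apply_of_ne_of_ne hij hik, ← add_mul, add_sub_cancel, one_mul]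

theorem sum_tTransform {s : Finset ι} {j k : ι} (hj : j ∈ s) (hk : k ∈ s) (t : K) (b : ι → K) :
    ∑ i ∈ s, tTransform j k t b i = ∑ i ∈ s, b i := by
  have hswap : ∑ i ∈ s, b (Equiv.swap j k i) = ∑ i ∈ s, b i :=
    (Equiv.swap j k).sum_comp s b fun i hi => by
      rcases (Equiv.swap_apply_ne_self_iff.1 hi).2 with rfl | rfl <;> assumption
  simp only [tTransform]
  rw [Finset.sum_add_distrib, ← Finset.mul_sum, ← Finset.mul_sum, hswap, ← add_mul,
    add_sub_cancel, one_mul]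

theorem hammingDist_tTransform_lt [Fintype ι] [DecidableEq K] {a b : ι → K} {j k : ι} {t : K}
    (hj : a j ≠ b j) (hk : a k ≠ b k)
    (h : a j = tTransform j k t b j ∨ a k = tTransform j k t b k) :
    hammingDist a (tTransform j k t b) < hammingDist a b := by
  have hsub : ∀ i, a i ≠ tTransform j k t b i → a i ≠ b i := fun i hi => by
    rcases eq_or_ne i j with rfl | hij
    · exact hj
    rcases eq_or_ne i k with rfl | hik
    · exact hk
    rwa [tTransform_apply_of_ne hij hik] at hi
  refine Finset.card_lt_card (Finset.ssubset_iff_of_subset ?_ |>.2 ?_)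
  · exact Finset.monotone_filter_right _ fun i _ => hsub i
  · rcases h with h | h
    · exact ⟨j, by simpa using hj, by simpa using h⟩
    · exact ⟨k, by simpa using hk, by simpa using h⟩

end TTransform

/-- Majorization of `a` by `b` as domination of the prefix sums in the order of the index type. It
is the usual majorization if `a` and `b` are antitone; allowing other `b` makes it possible to apply
T-transforms to `b` without sorting it again. -/
structure PrefixMajorized {ι K : Type*} [Fintype ι] [LinearOrder ι] [AddCommMonoid K] [LE K]
    (a b : ι → K) : Prop where
  sum_le (m : ι) : ∑ i with i ≤ m, a i ≤ ∑ i with i ≤ m, b i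
  sum_eq : ∑ i, a i = ∑ i, b i

namespace PrefixMajorized

variable {ι K : Type*} [Fintype ι] [LinearOrder ι] [LinearOrder K]

section AddCommMonoid

variable [AddCommMonoid K] [IsOrderedCancelAddMonoid K] {a b : ι → K}

theorem exists_crossing (h : PrefixMajorized a b) (hab : a ≠ b) :
    ∃ j k, j < k ∧ a j < b j ∧ b k < a k ∧ ∀ i < k, a i ≤ b i := by
  have hlt : ∃ k, b k < a k := by
    by_contra! hle
    exact hab (funext fun i =>
      (Finset.sum_eq_sum_iff_of_le fun i _ => hle i).1 h.sum_eq i (Finset.mem_univ i))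
  obtain ⟨k, hk, hmin⟩ := WellFounded.has_min (r := (· < ·)) wellFounded_lt {k | b k < a k} hlt
  have hbelow : ∀ i < k, a i ≤ b i := fun i hi => not_lt.1 fun hi' => hmin i hi' hi
  obtain ⟨j, hj, hjlt⟩ : ∃ j ∈ Finset.univ.filter (· ≤ k), a j < b j := by
    by_contra! hge
    exact (Finset.sum_lt_sum hge ⟨k, by simp, hk⟩).not_ge (h.sum_le k)
  refine ⟨j, k, lt_of_le_of_ne (Finset.mem_filter.1 hj).2 ?_, hjlt, hk, hbelow⟩
  rintro rfl
  exact hjlt.asymm hk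

theorem eq_of_hammingDist_le_one (h : PrefixMajorized a b) (hd : hammingDist a b ≤ 1) : a = b := by
  by_contra hab
  obtain ⟨j, k, hjk, hj, hk, -⟩ := h.exists_crossing hab
  exact hjk.ne (Finset.card_le_one.1 hd j (by simpa using hj.ne) k (by simpa using hk.ne'))

end AddCommMonoid

theorem tTransform_right [Ring K] [IsOrderedAddMonoid K] {a b : ι → K}
    (h : PrefixMajorized a b) {j k : ι} {t : K} (hjk : j < k)
    (hbelow : ∀ i < k, a i ≤ b i) (hj : a j ≤ tTransform j k t b j) :
    PrefixMajorized a (tTransform j k t b) where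
  sum_eq := by rw [sum_tTransform (Finset.mem_univ j) (Finset.mem_univ k), h.sum_eq]
  sum_le m := by
    -- From `k` on the prefix sums of `b` are unchanged; before `k` the comparison is termwise.
    rcases le_or_gt k m with hkm | hmk
    · rw [sum_tTransform (by simpa using hjk.le.trans hkm) (by simpa using hkm)]
      exact h.sum_le m
    · refine Finset.sum_le_sum fun i hi => ?_
      have hik : i < k := (Finset.mem_filter.1 hi).2.trans_lt hmk
      rcases eq_or_ne i j with rfl | hij
      · exact hj
      · rw [tTransform_apply_of_ne hij hik.ne]
        exact hbelow i hik

theorem exists_tTransform [Field K] [IsStrictOrderedRing K] {a b : ι → K}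
    (h : PrefixMajorized a b) (ha : Antitone a) (hab : a ≠ b) :
    ∃ j k, j ≠ k ∧ ∃ t ∈ Set.Icc (0 : K) 1, PrefixMajorized a (tTransform j k t b) ∧
      hammingDist a (tTransform j k t b) < hammingDist a b := by
  obtain ⟨j, k, hjk, haj, hak, hbelow⟩ := h.exists_crossing hab
  have hakj : a k ≤ a j := ha hjk.le
  have hgap : 0 < b j - b k := by linarith
  set δ := min (b j - a j) (a k - b k)
  have hδ0 : 0 ≤ δ := le_min (by linarith) (by linarith)
  have hδj : δ ≤ b j - a j := min_le_left _ _
  have hδt : δ / (b j - b k) * (b j - b k) = δ := div_mul_cancel₀ δ hgap.ne'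
  have hleft : tTransform j k (1 - δ / (b j - b k)) b j = b j - δ := by
    rw [tTransform_apply_left]; linear_combination -hδt
  have hright : tTransform j k (1 - δ / (b j - b k)) b k = b k + δ := by
    rw [tTransform_apply_right]; linear_combination hδt
  refine ⟨j, k, hjk.ne, 1 - δ / (b j - b k), ⟨?_, ?_⟩, ?_, ?_⟩
  · exact sub_nonneg.2 ((div_le_one hgap).2 (by linarith))
  · exact sub_le_self 1 (div_nonneg hδ0 hgap.le)
  · exact h.tTransform_right hjk hbelow (by rw [hleft]; linarith)
  · refine hammingDist_tTransform_lt haj.ne hak.ne' ?_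
    rw [hleft, hright]
    rcases min_choice (b j - a j) (a k - b k) with hmin | hmin
    · exact Or.inl (by linarith)
    · exact Or.inr (by linarith)

end PrefixMajorized

theorem sum_mulVec_le_of_mem_colStochastic {ι K : Type*} [Fintype ι] [DecidableEq ι] [Ring K]
    [PartialOrder K] [IsOrderedRing K] {X : Matrix ι ι K} (hX : X ∈ colStochastic K ι)
    {s : Finset ι} {d : ι → K} (hpos : ∀ j ∈ s, 0 ≤ d j) (hneg : ∀ j ∉ s, d j ≤ 0) :
    ∑ i ∈ s, (X *ᵥ d) i ≤ ∑ j ∈ s, d j := by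
  have hcol (j : ι) : ∑ i ∈ s, X i j ≤ 1 := by
    rw [← sum_col_of_mem_colStochastic hX j]
    exact Finset.sum_le_univ_sum_of_nonneg fun i => nonneg_of_mem_colStochastic hX
  calc ∑ i ∈ s, (X *ᵥ d) i = ∑ j, (∑ i ∈ s, X i j) * d j := by
        simp only [mulVec, dotProduct, Finset.sum_mul]
        exact Finset.sum_comm
    _ ≤ ∑ j ∈ s, (∑ i ∈ s, X i j) * d j := by
        rw [← Finset.sum_add_sum_compl s]
        refine add_le_of_nonpos_right (Finset.sum_nonpos fun j hj => ?_)
        exact mul_nonpos_of_nonneg_of_nonpos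
          (Finset.sum_nonneg fun i _ => nonneg_of_mem_colStochastic hX)
          (hneg j (Finset.mem_compl.1 hj))
    _ ≤ ∑ j ∈ s, d j := Finset.sum_le_sum fun j hj => mul_le_of_le_one_left (hpos j hj) (hcol j)

theorem PrefixMajorized.mulVec_of_mem_doublyStochastic {ι K : Type*} [Fintype ι] [LinearOrder ι]
    [Ring K] [PartialOrder K] [IsOrderedRing K] {X : Matrix ι ι K}
    (hX : X ∈ doublyStochastic K ι) {b : ι → K} (hb : Antitone b) :
    PrefixMajorized (X *ᵥ b) b where
  sum_eq := sum_mulVec_of_mem_doublyStochastic hX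
  sum_le m := by
    -- Subtracting `b m` makes the entries nonnegative up to `m` and nonpositive afterwards.
    have hshift (i : ι) : (X *ᵥ fun j => b j - b m) i = (X *ᵥ b) i - b m := by
      simp only [mulVec, dotProduct, mul_sub, Finset.sum_sub_distrib, ← Finset.sum_mul,
        sum_row_of_mem_doublyStochastic hX, one_mul]
    have h := sum_mulVec_le_of_mem_colStochastic (s := {i | i ≤ m}) (d := fun j => b j - b m)
      (mem_doublyStochastic_iff_mem_rowStochastic_and_mem_colStochastic.1 hX).2
      (fun j hj => sub_nonneg.2 (hb (by simpa using hj)))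
      (fun j hj => sub_nonpos.2 (hb (le_of_not_ge (by simpa using hj))))
    simpa only [hshift, Finset.sum_sub_distrib, sub_le_sub_iff_right] using h

theorem exists_perm_antitone_comp {ι α : Type*} [Finite ι] [LinearOrder ι] [LinearOrder α]
    (f : ι → α) : ∃ σ : Equiv.Perm ι, Antitone (f ∘ σ) := by
  cases nonempty_fintype ι
  let e := Fintype.orderIsoFinOfCardEq ι rfl
  let τ := Tuple.sort (OrderDual.toDual ∘ f ∘ e)
  refine ⟨(e.symm.toEquiv.trans τ).trans e.toEquiv, fun i j hij => ?_⟩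
  exact Tuple.monotone_sort (OrderDual.toDual ∘ f ∘ e) (e.symm.monotone hij)

section Diagonal

variable {ι R : Type*} [Fintype ι] [DecidableEq ι]

theorem permMatrix_mul_diagonal [NonAssocSemiring R] (σ : Equiv.Perm ι) (d : ι → R) :
    σ.permMatrix R * diagonal d = diagonal (d ∘ σ) * σ.permMatrix R := by
  ext x y
  by_cases h : σ x = y <;> simp [Equiv.Perm.permMatrix, h]

variable [CommRing R]

theorem diagonal_mul_permMatrix_sandwich {σ : Equiv.Perm ι} {s : ι → R} (hσ : σ * σ = 1)
    (hs : s ∘ σ = -s) (d : ι → R) :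
    diagonal s * σ.permMatrix R * diagonal d * (diagonal s * σ.permMatrix R) =
      -diagonal (s ^ 2 * d ∘ σ) := by
  have hPP : σ.permMatrix R * σ.permMatrix R = 1 := by rw [← permMatrix_mul, hσ, permMatrix_one]
  calc diagonal s * σ.permMatrix R * diagonal d * (diagonal s * σ.permMatrix R)
    _ = diagonal s * (σ.permMatrix R * diagonal d) * diagonal s * σ.permMatrix R := by
        simp only [mul_assoc]
    _ = diagonal s * diagonal (d ∘ σ) * (σ.permMatrix R * diagonal s) * σ.permMatrix R := by
        rw [permMatrix_mul_diagonal]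
        simp only [mul_assoc]
    _ = diagonal s * diagonal (d ∘ σ) * diagonal (-s) := by
        rw [permMatrix_mul_diagonal, hs, mul_assoc _ _ (σ.permMatrix R), mul_assoc _ _
          (σ.permMatrix R), hPP, mul_one]
    _ = -diagonal (s ^ 2 * d ∘ σ) := by
        rw [diagonal_mul_diagonal, diagonal_mul_diagonal, diagonal_neg]
        congr 1
        ext i
        simp only [Pi.neg_apply, Pi.mul_apply, Pi.pow_apply]
        ring

variable [StarRing R]

theorem permMatrix_mem_unitaryGroup (σ : Equiv.Perm ι) :
    σ.permMatrix R ∈ unitaryGroup ι R := by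
  rw [mem_unitaryGroup_iff', star_eq_conjTranspose, conjTranspose_permMatrix, ← permMatrix_mul,
    mul_inv_cancel, permMatrix_one]

variable [Algebra ℚ≥0 R]

theorem isUnitaryAverage_diagonal_comp (σ : Equiv.Perm ι) (d : ι → R) :
    IsUnitaryAverage 1 (diagonal (d ∘ σ)) (diagonal d) := by
  have h : star (σ⁻¹.permMatrix R) * diagonal d * σ⁻¹.permMatrix R = diagonal (d ∘ σ) := by
    rw [star_eq_conjTranspose, conjTranspose_permMatrix, inv_inv, permMatrix_mul_diagonal,
      mul_assoc, ← permMatrix_mul, inv_mul_cancel, permMatrix_one, mul_one]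
  rw [← h]
  exact .conj ⟨_, permMatrix_mem_unitaryGroup σ⁻¹⟩

theorem isUnitaryAverage_diagonal_sq_mul_add_sq_mul_comp {σ : Equiv.Perm ι} {c s : ι → R}
    (hσ : σ * σ = 1) (hc : IsSelfAdjoint c) (hs : IsSelfAdjoint s) (hcσ : c ∘ σ = c)
    (hsσ : s ∘ σ = -s) (hcs : c ^ 2 + s ^ 2 = 1) (d : ι → R) :
    IsUnitaryAverage 2 (diagonal (c ^ 2 * d + s ^ 2 * d ∘ σ)) (diagonal d) := by
  have hG_star : star (diagonal c) = diagonal c := by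
    rw [star_eq_conjTranspose, diagonal_conjTranspose, hc.star_eq]
  have hH_star : star (diagonal s * σ.permMatrix R) = -(diagonal s * σ.permMatrix R) := by
    rw [star_mul, star_eq_conjTranspose, star_eq_conjTranspose, conjTranspose_permMatrix,
      inv_eq_of_mul_eq_one_left hσ, diagonal_conjTranspose, hs.star_eq, permMatrix_mul_diagonal,
      hsσ, ← neg_mul, diagonal_neg]
    rfl
  have hcomm : Commute (diagonal c) (diagonal s * σ.permMatrix R) := by
    rw [Commute, SemiconjBy, mul_assoc, permMatrix_mul_diagonal, hcσ, ← mul_assoc, ← mul_assoc,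
      (commute_diagonal c s).eq]
  have hsandwich := diagonal_mul_permMatrix_sandwich hσ hsσ
  have hunit : diagonal c * diagonal c -
      diagonal s * σ.permMatrix R * (diagonal s * σ.permMatrix R) = 1 := by
    have h := hsandwich 1
    rw [Pi.one_def, diagonal_one, mul_one] at h
    rw [h, sub_neg_eq_add, diagonal_mul_diagonal, diagonal_add, ← diagonal_one]
    congr 1
    ext i
    simpa [sq] using congrFun hcs i
  have h := IsUnitaryAverage.mul_mul_sub_mul_mul (B := diagonal d) hG_star hH_star hcomm hunit
  have hformula : c ^ 2 * d + s ^ 2 * d ∘ σ = fun i => c i * d i * c i + (s ^ 2 * d ∘ σ) i := by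
    ext i
    simp only [Pi.add_apply, Pi.mul_apply, Pi.pow_apply]
    ring
  rwa [hsandwich, sub_neg_eq_add, diagonal_mul_diagonal, diagonal_mul_diagonal, diagonal_add,
    ← hformula] at h

end Diagonal

theorem isUnitaryAverage_diagonal_tTransform {ι 𝕜 : Type*} [Fintype ι] [DecidableEq ι] [RCLike 𝕜]
    {j k : ι} (hjk : j ≠ k) {t : ℝ} (ht : t ∈ Set.Icc (0 : ℝ) 1) (b : ι → ℝ) :
    IsUnitaryAverage 2 (diagonal fun i => ((tTransform j k t b i : ℝ) : 𝕜))
      (diagonal fun i => (b i : 𝕜)) := by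
  let c : ι → ℝ := fun i => if i = j ∨ i = k then √t else 1
  let s : ι → ℝ := fun i => if i = j then √(1 - t) else if i = k then -√(1 - t) else 0
  have ht₀ : √t ^ 2 = t := Real.sq_sqrt ht.1
  have ht₁ : √(1 - t) ^ 2 = 1 - t := Real.sq_sqrt (sub_nonneg.2 ht.2)
  have hcσ (i : ι) : c (Equiv.swap j k i) = c i := by grind
  have hsσ (i : ι) : s (Equiv.swap j k i) = -s i := by grind
  have hcs (i : ι) : c i ^ 2 + s i ^ 2 = 1 := by grind
  have htransform (i : ι) :
      tTransform j k t b i = c i ^ 2 * b i + s i ^ 2 * b (Equiv.swap j k i) := by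
    grind [tTransform]
  have h := isUnitaryAverage_diagonal_sq_mul_add_sq_mul_comp (R := 𝕜)
    (c := fun i => (c i : 𝕜)) (s := fun i => (s i : 𝕜)) (Equiv.swap_mul_self j k)
    (funext fun _ => RCLike.conj_ofReal _) (funext fun _ => RCLike.conj_ofReal _)
    (funext fun i => by simp only [Function.comp_apply, hcσ])
    (funext fun i => by simp only [Function.comp_apply, hsσ, Pi.neg_apply, RCLike.ofReal_neg])
    (funext fun i => by simpa using congrArg (RCLike.ofReal (K := 𝕜)) (hcs i)) fun i => (b i : 𝕜)
  convert h using 3 with i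
  rw [htransform]
  push_cast
  rfl

theorem PrefixMajorized.isUnitaryAverage_diagonal {ι 𝕜 : Type*} [Fintype ι] [LinearOrder ι]
    [RCLike 𝕜] {a b : ι → ℝ} {m : ℕ} (h : PrefixMajorized a b) (ha : Antitone a)
    (hd : hammingDist a b ≤ m + 1) :
    IsUnitaryAverage (2 ^ m) (diagonal fun i => (a i : 𝕜)) (diagonal fun i => (b i : 𝕜)) := by
  induction m generalizing b with
  | zero =>
    obtain rfl := h.eq_of_hammingDist_le_one hd
    exact .refl _ _
  | succ m ih =>
    by_cases hab : a = b
    · rw [hab]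
      exact .refl _ _
    · obtain ⟨j, k, hjk, t, ht, h', hlt⟩ := h.exists_tTransform ha hab
      exact (ih h' (by omega)).trans (isUnitaryAverage_diagonal_tTransform hjk ht b)

theorem isUnitaryAverage_diagonal_mulVec {ι 𝕜 : Type*} [Fintype ι] [DecidableEq ι] [RCLike 𝕜]
    {X : Matrix ι ι ℝ} (hX : X ∈ doublyStochastic ℝ ι) (b : ι → ℝ) {m : ℕ}
    (hm : Fintype.card ι ≤ m + 1) :
    IsUnitaryAverage (2 ^ m) (diagonal fun i => ((X *ᵥ b) i : 𝕜))
      (diagonal fun i => (b i : 𝕜)) := by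
  -- The statement mentions no order: choose one and identify its decidable equality with the given.
  obtain ⟨order⟩ : Nonempty (LinearOrder ι) :=
    ⟨LinearOrder.lift' (Fintype.equivFin ι) (Fintype.equivFin ι).injective⟩
  obtain rfl : ‹DecidableEq ι› = order.toDecidableEq := Subsingleton.elim _ _
  obtain ⟨σ, hσ⟩ := exists_perm_antitone_comp (X *ᵥ b)
  obtain ⟨τ, hτ⟩ := exists_perm_antitone_comp b
  have hXστ : (X.submatrix σ τ) *ᵥ (b ∘ τ) = (X *ᵥ b) ∘ σ := by
    rw [submatrix_mulVec_equiv, Function.comp_assoc, Equiv.self_comp_symm, Function.comp_id]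
  have hmaj : PrefixMajorized ((X *ᵥ b) ∘ σ) (b ∘ τ) :=
    hXστ ▸ .mulVec_of_mem_doublyStochastic
      (reindex_mem_doublyStochastic (e₁ := σ.symm) (e₂ := τ.symm) hX) hτ
  have hsorted := hmaj.isUnitaryAverage_diagonal (𝕜 := 𝕜) hσ (hammingDist_le_card_fintype.trans hm)
  have hunsort := isUnitaryAverage_diagonal_comp σ.symm fun i => (((X *ᵥ b) ∘ σ) i : 𝕜)
  have hsort := isUnitaryAverage_diagonal_comp τ fun i => (b i : 𝕜)
  have h := (hunsort.trans hsorted).trans hsort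
  simpa [Function.comp_def] using h

theorem IsUnitaryAverage.exists_eq_sum {ι 𝕜 : Type*} [Fintype ι] [DecidableEq ι] [RCLike 𝕜]
    {A B : Matrix ι ι 𝕜} {N : ℕ} (h : IsUnitaryAverage N A B) :
    ∃ U : Fin N → Matrix ι ι 𝕜, (∀ i, U i ∈ unitaryGroup ι 𝕜) ∧
      A = ∑ i, ((1 : 𝕜) / N) • ((U i)ᴴ * B * U i) := by
  obtain ⟨U, rfl⟩ := h
  refine ⟨fun i => U i, fun i => (U i).2, ?_⟩
  rw [Finset.expect_univ, Fintype.card_fin, ← Finset.smul_sum, one_div,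
    ← NNRat.cast_smul_eq_nnqsmul 𝕜, NNRat.cast_inv, NNRat.cast_natCast]
  rfl

theorem stmt_10_general {ι 𝕜 : Type*} [Fintype ι] [DecidableEq ι] [RCLike 𝕜] {A B : Matrix ι ι 𝕜}
    {lA lB : ι → ℝ} {UA UB : Matrix ι ι 𝕜} {X : Matrix ι ι ℝ} {m : ℕ}
    (hm : Fintype.card ι ≤ m + 1) (hUA : UA ∈ unitaryGroup ι 𝕜) (hUB : UB ∈ unitaryGroup ι 𝕜)
    (hA : A = UAᴴ * diagonal (fun i => (lA i : 𝕜)) * UA)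
    (hB : B = UBᴴ * diagonal (fun i => (lB i : 𝕜)) * UB)
    (hX : X ∈ doublyStochastic ℝ ι) (hXl : X *ᵥ lB = lA) :
    ∃ U : Fin (2 ^ m) → Matrix ι ι 𝕜, (∀ i, U i ∈ unitaryGroup ι 𝕜) ∧
      A = ∑ i, ((1 : 𝕜) / 2 ^ m) • ((U i)ᴴ * B * U i) := by
  have hdiagA : IsUnitaryAverage 1 A (diagonal fun i => (lA i : 𝕜)) := hA ▸ .conj ⟨UA, hUA⟩
  have hdiag := isUnitaryAverage_diagonal_mulVec (𝕜 := 𝕜) hX lB hm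
  have hdiagB : IsUnitaryAverage 1 (diagonal fun i => (lB i : 𝕜)) B := hB ▸ .conj_right ⟨UB, hUB⟩
  have h : IsUnitaryAverage (2 ^ m) A B := by
    simpa only [one_mul, mul_one] using (hdiagA.trans (hXl ▸ hdiag)).trans hdiagB
  exact_mod_cast h.exists_eq_sum

theorem stmt_10 (n : ℕ) (A B : Matrix (Fin n) (Fin n) ℂ)
    (hA : Aᴴ = A) (hB : Bᴴ = B)
    (hmaj : ∃ (lA lB : Fin n → ℝ) (UA UB : Matrix (Fin n) (Fin n) ℂ)
        (X : Matrix (Fin n) (Fin n) ℝ),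
      UAᴴ * UA = 1 ∧ UA * UAᴴ = 1 ∧ UBᴴ * UB = 1 ∧ UB * UBᴴ = 1 ∧
      A = UAᴴ * Matrix.diagonal (fun i => (lA i : ℂ)) * UA ∧
      B = UBᴴ * Matrix.diagonal (fun i => (lB i : ℂ)) * UB ∧
      IsDoublyStochastic X ∧ X *ᵥ lB = lA) :
    ∃ U : Fin (2 ^ (n - 1)) → Matrix (Fin n) (Fin n) ℂ,
      (∀ i, (U i)ᴴ * U i = 1 ∧ U i * (U i)ᴴ = 1) ∧
      A = ∑ i, ((1 : ℂ) / 2 ^ (n - 1)) • ((U i)ᴴ * B * U i) := by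
  obtain ⟨lA, lB, UA, UB, X, hUA, hUA', hUB, hUB', hAdiag, hBdiag, hX, hXl⟩ := hmaj
  exact stmt_10_general (by rw [Fintype.card_fin]; omega) ⟨hUA, hUA'⟩ ⟨hUB, hUB'⟩ hAdiag hBdiag
    (mem_doublyStochastic_iff_sum.2 hX) hXl
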